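/- Let p be an odd prime, n ≥ 1, and R a commutative ring in which p·1 = 0. Let G(R) be the set of residue classes in R[X]/(X^{p^n}) of polynomials of the form X + Σ_{k=1}^{n−1} a_k X^{p^k} with a_k ∈ R. Then: (i) for all f, g ∈ G(R), the class of g(f(X)) again lies in G(R); (ii) for every f ∈ G(R) there exists a unique g ∈ G(R) with g(f(X)) ≡ X (mod X^{p^n}), and this g also satisfies f(g(X)) ≡ X (mod X^{p^n}). Consequently G(R) is a group under the product f·g := class of g(f(X)), with identity the class of X. -/

import Mathlib

open Polynomial

/-- Additive group generated by the monomials `a X^(p^k)`, `k ≥ m`. -/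
noncomputable def TT (p : ℕ) (R : Type) [CommRing R] (m : ℕ) : AddSubgroup (Polynomial R) :=
  AddSubgroup.closure {f | ∃ (a : R) (k : ℕ), m ≤ k ∧ f = C a * X ^ (p ^ k)}

section
variable {p : ℕ} {R : Type} [CommRing R]

theorem TT_mem (a : R) {m k : ℕ} (h : m ≤ k) : C a * X ^ (p ^ k) ∈ TT p R m :=
  AddSubgroup.subset_closure ⟨a, k, h, rfl⟩

theorem frob_add (hp : p.Prime) (hpR : (p : R) = 0) (x y : R[X]) (k : ℕ) :
    (x + y) ^ (p ^ k) = x ^ (p ^ k) + y ^ (p ^ k) := by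
  have h : (p : R[X]) = 0 := by
    rw [← map_natCast (C : R →+* R[X]), hpR, map_zero]
  rw [add_pow_prime_pow_eq hp, h]
  simp

theorem frob_zero (hp : p.Prime) (k : ℕ) : (0 : R[X]) ^ (p ^ k) = 0 :=
  zero_pow (pow_ne_zero _ hp.ne_zero)

theorem frob_neg (hp : p.Prime) (hpR : (p : R) = 0) (x : R[X]) (k : ℕ) :
    (-x) ^ (p ^ k) = -(x ^ (p ^ k)) := by
  have h := frob_add hp hpR x (-x) k
  rw [add_neg_cancel, frob_zero hp] at h
  exact (neg_eq_of_add_eq_zero_right h.symm).symm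

theorem TT_smul (b : R) {m : ℕ} {u : R[X]} (hu : u ∈ TT p R m) : C b * u ∈ TT p R m := by
  refine AddSubgroup.closure_induction (p := fun u _ => C b * u ∈ TT p R m) ?_ ?_ ?_ ?_ hu
  · rintro _ ⟨a, k, hk, rfl⟩
    rw [← mul_assoc, ← C_mul]
    exact TT_mem _ hk
  · simp [(TT p R m).zero_mem]
  · intro x y _ _ hx hy
    rw [mul_add]; exact (TT p R m).add_mem hx hy
  · intro x _ hx
    rw [mul_neg]; exact (TT p R m).neg_mem hx

theorem TT_frob (hp : p.Prime) (hpR : (p : R) = 0) {m j : ℕ} {u : R[X]} (hu : u ∈ TT p R m) :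
    u ^ (p ^ j) ∈ TT p R (m + j) := by
  refine AddSubgroup.closure_induction (p := fun u _ => u ^ (p ^ j) ∈ TT p R (m + j))
    ?_ ?_ ?_ ?_ hu
  · rintro _ ⟨a, k, hk, rfl⟩
    rw [mul_pow, ← C_pow, ← pow_mul, ← pow_add]
    exact TT_mem _ (by omega)
  · rw [frob_zero hp]; exact (TT p R _).zero_mem
  · intro x y _ _ hx hy
    rw [frob_add hp hpR]; exact (TT p R _).add_mem hx hy
  · intro x _ hx
    rw [frob_neg hp hpR]; exact (TT p R _).neg_mem hx

theorem TT_mono {m m' : ℕ} (h : m ≤ m') : TT p R m' ≤ TT p R m := by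
  apply AddSubgroup.closure_mono
  rintro _ ⟨a, k, hk, rfl⟩
  exact ⟨a, k, h.trans hk, rfl⟩

theorem TT_comp (hp : p.Prime) (hpR : (p : R) = 0) {m l : ℕ} {t u : R[X]}
    (ht : t ∈ TT p R m) (hu : u ∈ TT p R l) : t.comp u ∈ TT p R (l + m) := by
  refine AddSubgroup.closure_induction (p := fun t _ => t.comp u ∈ TT p R (l + m))
    ?_ ?_ ?_ ?_ ht
  · rintro _ ⟨a, k, hk, rfl⟩
    simp only [mul_comp, C_comp, X_pow_comp]
    exact TT_smul _ (TT_mono (by omega) (TT_frob (j := k) hp hpR hu))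
  · simp [(TT p R _).zero_mem]
  · intro x y _ _ hx hy
    rw [add_comp]; exact (TT p R _).add_mem hx hy
  · intro x _ hx
    rw [neg_comp]; exact (TT p R _).neg_mem hx

theorem TT_comp_add (hp : p.Prime) (hpR : (p : R) = 0) {m : ℕ} {t : R[X]} (u v : R[X])
    (ht : t ∈ TT p R m) : t.comp (u + v) = t.comp u + t.comp v := by
  refine AddSubgroup.closure_induction (p := fun t _ => t.comp (u + v) = t.comp u + t.comp v)
    ?_ ?_ ?_ ?_ ht
  · rintro _ ⟨a, k, hk, rfl⟩
    simp only [mul_comp, C_comp, X_pow_comp]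
    rw [frob_add hp hpR, mul_add]
  · simp
  · intro x y _ _ hx hy
    simp only [add_comp, hx, hy]; ring
  · intro x _ hx
    simp only [neg_comp, hx]; ring

theorem TT_dvd {m : ℕ} {t : R[X]} (ht : t ∈ TT p R m) : (X : R[X]) ^ (p ^ m) ∣ t ∨ p = 0 := by
  by_cases h0 : p = 0
  · exact Or.inr h0
  left
  refine AddSubgroup.closure_induction (p := fun t _ => (X : R[X]) ^ (p ^ m) ∣ t)
    ?_ ?_ ?_ ?_ ht
  · rintro _ ⟨a, k, hk, rfl⟩
    exact Dvd.dvd.mul_left (pow_dvd_pow _ (Nat.pow_le_pow_right (Nat.pos_of_ne_zero h0) hk)) _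
  · exact dvd_zero _
  · intro x y _ _ hx hy
    exact dvd_add hx hy
  · intro x _ hx
    exact (dvd_neg).2 hx

/-- closure under composition for `X + TT 1`. -/
theorem comp_mem (hp : p.Prime) (hpR : (p : R) = 0) {f g : R[X]}
    (hf : f - X ∈ TT p R 1) (hg : g - X ∈ TT p R 1) : g.comp f - X ∈ TT p R 1 := by
  obtain ⟨t, rfl⟩ : ∃ t, g = X + t := ⟨g - X, by ring⟩
  obtain ⟨s, rfl⟩ : ∃ s, f = X + s := ⟨f - X, by ring⟩
  rw [add_sub_cancel_left] at hf hg
  rw [add_comp, X_comp, TT_comp_add hp hpR _ _ hg, comp_X]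
  have h := TT_mono (m := 1) (by omega) (TT_comp hp hpR hg hf)
  have e : X + s + (t + t.comp s) - X = s + (t + t.comp s) := by ring
  rw [e]
  exact add_mem hf (add_mem hg h)

theorem left_inv_approx (hp : p.Prime) (hpR : (p : R) = 0) {f : R[X]}
    (hf : f - X ∈ TT p R 1) (m : ℕ) :
    ∃ g, g - X ∈ TT p R 1 ∧ g.comp f - X ∈ TT p R (m + 1) := by
  induction m with
  | zero => exact ⟨X, by simp [(TT p R 1).zero_mem], by simpa using hf⟩
  | succ m ih =>
    obtain ⟨g, hg, hgf⟩ := ih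
    obtain ⟨t, ht⟩ : ∃ t, g.comp f = X + t := ⟨g.comp f - X, by ring⟩
    rw [ht, add_sub_cancel_left] at hgf
    have ht1 : t ∈ TT p R 1 := TT_mono (by omega) hgf
    refine ⟨(X - t).comp g, comp_mem hp hpR hg ?_, ?_⟩
    · have e : X - t - X = -t := by ring
      rw [e]; exact neg_mem ht1
    · rw [comp_assoc, ht, sub_comp, X_comp, TT_comp_add hp hpR _ _ hgf, comp_X]
      have e : X + t - (t + t.comp t) - X = - t.comp t := by ring
      rw [e]
      exact neg_mem (TT_mono (by omega) (TT_comp hp hpR hgf ht1))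

theorem mk_comp_left {N : ℕ} {g g' f : R[X]} (hf : (X : R[X]) ∣ f)
    (h : (X : R[X]) ^ N ∣ g - g') : (X : R[X]) ^ N ∣ g.comp f - g'.comp f := by
  obtain ⟨q, hq⟩ := h
  rw [← sub_comp, hq, mul_comp, X_pow_comp]
  exact Dvd.dvd.mul_right (pow_dvd_pow_of_dvd hf N) _

theorem mk_comp_right {N : ℕ} {g f f' : R[X]}
    (h : (X : R[X]) ^ N ∣ f - f') : (X : R[X]) ^ N ∣ g.comp f - g.comp f' := by
  refine h.trans ?_
  have := sub_dvd_eval_sub f f' (g.map C)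
  simpa [eval_map, comp] using this

theorem P_sub (n : ℕ) (a : ℕ → R) :
    (X + ∑ k ∈ Finset.Ico 1 n, C (a k) * X ^ (p ^ k)) - X ∈ TT p R 1 := by
  rw [add_sub_cancel_left]
  exact sum_mem fun k hk => TT_mem _ (Finset.mem_Ico.1 hk).1

theorem TT_repr (hp : p.Prime) (n : ℕ) {t : R[X]} (ht : t ∈ TT p R 1) :
    ∃ a : ℕ → R, (X : R[X]) ^ (p ^ n) ∣ (∑ k ∈ Finset.Ico 1 n, C (a k) * X ^ (p ^ k)) - t := by
  refine AddSubgroup.closure_induction (p := fun t _ => ∃ a : ℕ → R,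
    (X : R[X]) ^ (p ^ n) ∣ (∑ k ∈ Finset.Ico 1 n, C (a k) * X ^ (p ^ k)) - t)
    ?_ ?_ ?_ ?_ ht
  · rintro _ ⟨a, k, hk, rfl⟩
    by_cases hkn : k < n
    · refine ⟨Pi.single k a, ?_⟩
      rw [Finset.sum_eq_single k]
      · simp
      · intro b _ hb
        simp [Pi.single_eq_of_ne hb]
      · intro h
        exact absurd (Finset.mem_Ico.2 ⟨hk, hkn⟩) h
    · refine ⟨0, ?_⟩
      simp only [Pi.zero_apply, C_0, zero_mul, Finset.sum_const_zero, zero_sub, dvd_neg]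
      exact Dvd.dvd.mul_left (pow_dvd_pow _ (Nat.pow_le_pow_right hp.pos (by omega))) _
  · exact ⟨0, by simp⟩
  · rintro x y _ _ ⟨a, ha⟩ ⟨b, hb⟩
    refine ⟨a + b, ?_⟩
    convert dvd_add ha hb using 1
    simp only [Pi.add_apply, C_add, add_mul, Finset.sum_add_distrib]
    ring
  · rintro x _ ⟨a, ha⟩
    refine ⟨-a, ?_⟩
    convert (dvd_neg).2 ha using 1
    simp only [Pi.neg_apply, C_neg, neg_mul, Finset.sum_neg_distrib]
    ring

theorem X_dvd_of (hp : p.Prime) {f : R[X]} (hf : f - X ∈ TT p R 1) : (X : R[X]) ∣ f := by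
  have h := (TT_dvd hf).resolve_right hp.ne_zero
  have h2 : (X : R[X]) ∣ f - X := (dvd_pow_self X (pow_ne_zero _ hp.ne_zero)).trans h
  simpa using dvd_add h2 (dvd_refl X)
end

/-- For an odd prime `p`, `n ≥ 1`, and a commutative ring `R` with `p·1 = 0`,
let `G(R)` be the set of residue classes in `R[X]/(X^(p^n))` of polynomials of the form
`X + Σ_{k=1}^{n-1} a_k X^(p^k)`.  Then (i) `G(R)` is closed under the operation sending the
classes of `f, g` to the class of `g(f(X))`; (ii) each `f` has a unique two-sided inverse in
`G(R)` for this operation; consequently `G(R)` is a group under `f·g := class of g(f(X))`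
with identity the class of `X`. -/
theorem stmt_1 (p n : ℕ) (hp : p.Prime) (hodd : Odd p) (hn : 1 ≤ n)
    (R : Type) [CommRing R] (hpR : (p : R) = 0)
    (P : Set (Polynomial R))
    (hP : P = {f | ∃ a : ℕ → R,
      f = X + ∑ k ∈ Finset.Ico 1 n, C (a k) * X ^ (p ^ k)})
    (π : Polynomial R →+* Polynomial R ⧸ Ideal.span {(X : Polynomial R) ^ (p ^ n)})
    (hπ : π = Ideal.Quotient.mk (Ideal.span {(X : Polynomial R) ^ (p ^ n)}))
    (G : Set (Polynomial R ⧸ Ideal.span {(X : Polynomial R) ^ (p ^ n)}))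
    (hG : G = π '' P) :
    -- (i) closure under composition
    (∀ f ∈ P, ∀ g ∈ P, π (g.comp f) ∈ G) ∧
    -- (ii) existence and uniqueness of inverses
    (∀ f ∈ P, ∃ g ∈ P, π (g.comp f) = π X ∧ π (f.comp g) = π X ∧
      ∀ g' ∈ P, π (g'.comp f) = π X → π g' = π g) ∧
    -- consequently, G(R) is a group under `f·g := class of g(f(X))` with identity class of X
    (∃ (mul : G → G → G) (one : G) (inv : G → G),
      (∀ a b c, mul (mul a b) c = mul a (mul b c)) ∧
      (∀ a, mul one a = a) ∧ (∀ a, mul a one = a) ∧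
      (∀ a, mul (inv a) a = one) ∧
      (one : Polynomial R ⧸ Ideal.span {(X : Polynomial R) ^ (p ^ n)}) = π X ∧
      (∀ (f g : Polynomial R), f ∈ P → g ∈ P → ∀ (x y : G),
        (x : Polynomial R ⧸ Ideal.span {(X : Polynomial R) ^ (p ^ n)}) = π f →
        (y : Polynomial R ⧸ Ideal.span {(X : Polynomial R) ^ (p ^ n)}) = π g →
        ((mul x y : G) : Polynomial R ⧸ Ideal.span {(X : Polynomial R) ^ (p ^ n)}) =
          π (g.comp f))) := by
  have hπ' : ∀ f g, π f = π g ↔ (X : R[X]) ^ (p ^ n) ∣ f - g := by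
    intro f g
    rw [hπ, Ideal.Quotient.eq, Ideal.mem_span_singleton]
  have hPT : ∀ f ∈ P, f - X ∈ TT p R 1 := by
    intro f hf
    rw [hP] at hf
    obtain ⟨a, rfl⟩ := hf
    exact P_sub n a
  have hTP : ∀ f, f - X ∈ TT p R 1 → ∃ g ∈ P, π g = π f := by
    intro f hf
    obtain ⟨a, ha⟩ := TT_repr hp n hf
    refine ⟨X + ∑ k ∈ Finset.Ico 1 n, C (a k) * X ^ (p ^ k), ?_, ?_⟩
    · rw [hP]; exact ⟨a, rfl⟩
    · rw [hπ']
      convert ha using 1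
      ring
  have hcong : ∀ f f' g g', f ∈ P → π f = π f' → π g = π g' →
      π (g.comp f) = π (g'.comp f') := by
    intro f f' g g' hf h1 h2
    refine Eq.trans (b := π (g'.comp f)) ?_ ?_
    · rw [hπ'] at h2 ⊢
      exact mk_comp_left (X_dvd_of hp (hPT f hf)) h2
    · rw [hπ'] at h1 ⊢
      exact mk_comp_right h1
  have hcl : ∀ f ∈ P, ∀ g ∈ P, π (g.comp f) ∈ G := by
    intro f hf g hg
    obtain ⟨h, hh, e⟩ := hTP _ (comp_mem hp hpR (hPT f hf) (hPT g hg))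
    rw [hG]
    exact ⟨h, hh, e⟩
  have hleft : ∀ f ∈ P, ∃ g ∈ P, π (g.comp f) = π X := by
    intro f hf
    obtain ⟨g, hg, hgf⟩ := left_inv_approx hp hpR (hPT f hf) n
    obtain ⟨g', hg', e⟩ := hTP g hg
    refine ⟨g', hg', (hcong f f g' g hf rfl e).trans ?_⟩
    rw [hπ']
    exact (TT_dvd (TT_mono (Nat.le_succ n) hgf)).resolve_right hp.ne_zero
  have hXP : X ∈ P := by
    rw [hP]; exact ⟨0, by simp⟩
  -- if `h ∘ g ≡ X` and `g ∘ f ≡ X` then `h ≡ f`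
  have huniq : ∀ f ∈ P, ∀ g ∈ P, ∀ h ∈ P, π (h.comp g) = π X → π (g.comp f) = π X →
      π h = π f := by
    intro f hf g hg h hh h1 h2
    have e1 : π ((h.comp g).comp f) = π (X.comp f) := hcong f f _ _ hf rfl h1
    have e2 : π (h.comp X) = π (h.comp (g.comp f)) := hcong X _ _ _ hXP h2.symm rfl
    rw [comp_assoc, X_comp] at e1
    rw [comp_X] at e2
    exact e2.trans e1
  have hinv : ∀ f ∈ P, ∃ g ∈ P, π (g.comp f) = π X ∧ π (f.comp g) = π X ∧
      ∀ g' ∈ P, π (g'.comp f) = π X → π g' = π g := by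
    intro f hf
    obtain ⟨g, hg, hgf⟩ := hleft f hf
    obtain ⟨h, hh, hhg⟩ := hleft g hg
    have e := huniq f hf g hg h hh hhg hgf
    have hfg : π (f.comp g) = π X := (hcong g g f h hg rfl e.symm).trans hhg
    exact ⟨g, hg, hgf, hfg, fun g' hg' h' => huniq g hg f hf g' hg' h' hfg⟩
  refine ⟨hcl, hinv, ?_⟩
  have hrep : ∀ x : G, ∃ f ∈ P, π f = x := by
    rintro ⟨x, hx⟩
    rw [hG] at hx
    obtain ⟨f, hf, e⟩ := hx
    exact ⟨f, hf, e⟩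
  have hPG : ∀ f ∈ P, π f ∈ G := by
    intro f hf
    rw [hG]; exact ⟨f, hf, rfl⟩
  choose rep hrepP hrepπ using hrep
  choose iv hivP hiv1 hiv2 _ using hinv
  refine ⟨fun x y => ⟨π ((rep y).comp (rep x)), hcl _ (hrepP x) _ (hrepP y)⟩,
    ⟨π X, hPG _ hXP⟩, fun x => ⟨π (iv (rep x) (hrepP x)), hPG _ (hivP _ _)⟩, ?_, ?_, ?_, ?_,
    rfl, ?_⟩
  · intro a b c
    apply Subtype.ext
    refine (hcong _ ((rep b).comp (rep a)) _ (rep c) (hrepP _) (hrepπ _) rfl).trans ?_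
    refine Eq.trans ?_
      (hcong _ (rep a) _ ((rep c).comp (rep b)) (hrepP _) rfl (hrepπ _)).symm
    rw [comp_assoc]
  · intro a
    apply Subtype.ext
    refine (hcong _ X _ (rep a) (hrepP _) (hrepπ _) rfl).trans ?_
    rw [comp_X]; exact hrepπ a
  · intro a
    apply Subtype.ext
    refine (hcong _ (rep a) _ X (hrepP _) rfl (hrepπ _)).trans ?_
    rw [X_comp]; exact hrepπ a
  · intro a
    apply Subtype.ext
    exact (hcong _ _ _ (rep a) (hrepP _) (hrepπ _) rfl).trans (hiv2 _ _)
  · intro f g hf hg x y hx hy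
    exact hcong _ _ _ _ (hrepP _) ((hrepπ x).trans hx) ((hrepπ y).trans hy)
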